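/- Existence form of the main hopset theorem (Theorem 3.5, without the computational complexity claims): there is an absolute constant c > 0 with the following property. Let V be a finite set with n = |V| ≥ 2, and let w : V → V → [0,∞] be a weight function all of whose finite off-diagonal values are at least 1, such that d_w(u,v) < ∞ for all u,v (G is connected); let Λ = max_{u≠v} d_w(u,v) ≥ 2 be the aspect ratio. Let 0 < ε < 1 be real, κ ≥ 2 an integer, and 0 < ρ < 1/2 real with κρ ≥ 1, and set ℓ = ⌊log₂(κρ)⌋ + ⌈(κ+1)/(κρ)⌉ − 1 and β = ⌈(c · log₂Λ · log₂ n · (log₂(κρ) + 1/ρ) / ε)^ℓ⌉. Then there exists a weight function w_H on V whose set of pairs with finite value (the hopset edges) has cardinality at most ⌈log₂Λ⌉ · n^{1+1/κ}, such that, with w' the pointwise minimum of w and w_H, every pair u, v ∈ V satisfies d_w(u,v) ≤ d_{w'}^{(β)}(u,v) ≤ (1+ε) · d_w(u,v). -/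

import Mathlib

open scoped ENNReal BigOperators

/-- The `t`-hop-bounded distance for a weight function `w` on `V`: the infimum,
over all sequences `u = x 0, x 1, ..., x m = v` with `m <= t`, of
the total weight `Sum_{j<m} w (x j) (x (j+1))`. -/
noncomputable def hopDist {V : Type*} (w : V → V → ℝ≥0∞) (t : ℕ) (u v : V) : ℝ≥0∞ :=
  ⨅ (m : ℕ) (_ : m ≤ t) (x : ℕ → V) (_ : x 0 = u) (_ : x m = v),
    ∑ j ∈ Finset.range m, w (x j) (x (j + 1))

/-- The distance for a weight function `w`: the infimum of hop-bounded distances. -/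
noncomputable def graphDist {V : Type*} (w : V → V → ℝ≥0∞) (u v : V) : ℝ≥0∞ :=
  ⨅ t : ℕ, hopDist w t u v

/-!
Random sampling gives successive levels of pivots, of sizes about `n ^ e i` with the exponents `e i`
decreasing to `0`. Each vertex of a level gets shortcuts to its nearest pivot in the next level and
to the vertices of its own level that are closer than this pivot; on average this costs about
`n ^ (1 + 1 / (2 ^ (ℓ + 1) - 1))` pairs per level.

To route from `x` to `y` at distance `d`, cut a shortest path into `S` segments and treat each of
them with the previous level. A segment fails only if a pivot is within `2 * d / S`. Advancing from
both ends up to the first failure leaves two pivots, which either have a shortcut between them or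
exhibit a pivot of the next level near `x`. One level adds `8 / S` to the stretch and multiplies the
number of hops by `7 * S`; the last level has no next one, so routing succeeds there.

The pairs of all levels exceed the claimed size by a factor `10 * (ℓ + 1)`. If `Λ ≤ β`, shortest
paths have at most `β` edges and no hopset is needed; otherwise `Λ > 2 ^ (20 * ℓ)`, so `log₂ Λ`
absorbs this factor.
-/

section HopDist

variable {V : Type*} (w : V → V → ℝ≥0∞)

lemma hopDist_le_sum {t m : ℕ} (hm : m ≤ t) (x : ℕ → V) :
    hopDist w t (x 0) (x m) ≤ ∑ j ∈ Finset.range m, w (x j) (x (j + 1)) :=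
  iInf₂_le_of_le m hm (iInf₂_le_of_le x rfl (iInf_le _ rfl))

lemma le_hopDist_iff {t : ℕ} {u v : V} {r : ℝ≥0∞} :
    r ≤ hopDist w t u v ↔ ∀ m ≤ t, ∀ x : ℕ → V, x 0 = u → x m = v →
      r ≤ ∑ j ∈ Finset.range m, w (x j) (x (j + 1)) := by
  simp only [hopDist, le_iInf_iff]

lemma hopDist_self (t : ℕ) (u : V) : hopDist w t u u = 0 := by
  simpa using hopDist_le_sum w (Nat.zero_le t) fun _ ↦ u

lemma hopDist_one_le (u v : V) : hopDist w 1 u v ≤ w u v := by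
  simpa using hopDist_le_sum w (le_refl 1) fun j ↦ if j = 0 then u else v

lemma hopDist_anti {s t : ℕ} (hst : s ≤ t) (u v : V) : hopDist w t u v ≤ hopDist w s u v := by
  rw [le_hopDist_iff]
  rintro m hm x rfl rfl
  exact hopDist_le_sum w (hm.trans hst) x

lemma hopDist_add_le (s t : ℕ) (u x v : V) :
    hopDist w (s + t) u v ≤ hopDist w s u x + hopDist w t x v := by
  rw [← tsub_le_iff_right, le_hopDist_iff]
  rintro m hm p rfl hpx
  rw [tsub_le_iff_right, ← tsub_le_iff_left, le_hopDist_iff]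
  rintro k hk q hqx rfl
  rw [tsub_le_iff_left]
  let concat : ℕ → V := fun j ↦ if j ≤ m then p j else q (j - m)
  have concat_add (j : ℕ) : concat (m + j) = q j := by
    rcases j.eq_zero_or_pos with rfl | hj
    · simp [concat, hpx, hqx]
    · simp [concat, hj.ne']
  calc hopDist w (s + t) (p 0) (q k)
      = hopDist w (s + t) (concat 0) (concat (m + k)) := by simp [concat_add, concat]
    _ ≤ ∑ j ∈ Finset.range (m + k), w (concat j) (concat (j + 1)) :=
        hopDist_le_sum w (add_le_add hm hk) concat
    _ = _ := by
        rw [Finset.sum_range_add]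
        congr 1
        · refine Finset.sum_congr rfl fun j hj ↦ ?_
          have hjm := Finset.mem_range.1 hj
          simp only [concat, hjm.le, Nat.succ_le_iff.2 hjm, if_true]
        · simp only [add_assoc, concat_add]

variable {w} in
lemma hopDist_comm (hsymm : ∀ a b, w a b = w b a) (t : ℕ) (u v : V) :
    hopDist w t u v = hopDist w t v u := by
  suffices hle : ∀ u v, hopDist w t u v ≤ hopDist w t v u from (hle u v).antisymm (hle v u)
  intro u v
  rw [le_hopDist_iff]
  rintro m hm x rfl rfl
  calc hopDist w t (x m) (x 0)
      = hopDist w t (x (m - 0)) (x (m - m)) := by simp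
    _ ≤ ∑ j ∈ Finset.range m, w (x (m - j)) (x (m - (j + 1))) :=
        hopDist_le_sum w hm fun j ↦ x (m - j)
    _ = ∑ j ∈ Finset.range m, w (x (m - 1 - j)) (x (m - 1 - j + 1)) := by
        refine Finset.sum_congr rfl fun j hj ↦ ?_
        have hjm := Finset.mem_range.1 hj
        rw [hsymm, show m - (j + 1) = m - 1 - j by omega, show m - 1 - j + 1 = m - j by omega]
    _ = ∑ j ∈ Finset.range m, w (x j) (x (j + 1)) :=
        Finset.sum_range_reflect (fun j ↦ w (x j) (x (j + 1))) m

end HopDist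

section GraphDist

variable {V : Type*} (w : V → V → ℝ≥0∞)

lemma graphDist_le_hopDist (t : ℕ) (u v : V) : graphDist w u v ≤ hopDist w t u v :=
  iInf_le _ t

lemma graphDist_le (u v : V) : graphDist w u v ≤ w u v :=
  (graphDist_le_hopDist w 1 u v).trans (hopDist_one_le w u v)

lemma graphDist_self (u : V) : graphDist w u u = 0 := by
  simpa [hopDist_self] using graphDist_le_hopDist w 0 u u

lemma graphDist_triangle (u x v : V) :
    graphDist w u v ≤ graphDist w u x + graphDist w x v :=
  ENNReal.le_iInf_add_iInf fun s t ↦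
    (graphDist_le_hopDist w (s + t) u v).trans (hopDist_add_le w s t u x v)

variable {w} in
lemma graphDist_comm (hsymm : ∀ a b, w a b = w b a) (u v : V) :
    graphDist w u v = graphDist w v u :=
  iInf_congr fun t ↦ hopDist_comm hsymm t u v

variable {w} in
lemma graphDist_le_hopDist_of_graphDist_le {w' : V → V → ℝ≥0∞}
    (hw' : ∀ a b, graphDist w a b ≤ w' a b) (t : ℕ) (u v : V) :
    graphDist w u v ≤ hopDist w' t u v := by
  rw [le_hopDist_iff]
  rintro m - x rfl rfl
  induction m with
  | zero => simp [graphDist_self]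
  | succ m ih =>
    rw [Finset.sum_range_succ]
    exact (graphDist_triangle w _ (x m) _).trans (add_le_add ih (hw' _ _))

lemma exists_ne_add_graphDist_eq [Finite V] {v y : V} (hvy : v ≠ y) :
    ∃ u, u ≠ v ∧ w v u + graphDist w u y = graphDist w v y := by
  have : Nonempty {u // u ≠ v} := ⟨⟨y, hvy.symm⟩⟩
  obtain ⟨⟨u, huv⟩, hmin⟩ := Finite.exists_min fun u : {u // u ≠ v} ↦ w v u + graphDist w u y
  refine ⟨u, huv, le_antisymm (le_iInf fun t ↦ ?_) ?_⟩
  · rw [le_hopDist_iff]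
    rintro m - x hx hxy
    induction m generalizing x with
    | zero => exact absurd (hx.symm.trans hxy) hvy
    | succ m ih =>
      rw [Finset.sum_range_succ']
      by_cases hx₁ : x 1 = v
      · exact (ih (fun j ↦ x (j + 1)) hx₁ hxy).trans le_self_add
      have htail : graphDist w (x 1) y ≤ ∑ j ∈ Finset.range m, w (x (j + 1)) (x (j + 1 + 1)) :=
        (graphDist_le_hopDist w m _ _).trans
          (hxy ▸ hopDist_le_sum w le_rfl fun j ↦ x (j + 1))
      calc w v u + graphDist w u y
          ≤ w v (x 1) + graphDist w (x 1) y := hmin ⟨x 1, hx₁⟩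
        _ ≤ _ := by rw [hx, add_comm]; gcongr
  · exact (graphDist_triangle w v u y).trans (by gcongr; exact graphDist_le w v u)

variable {w} in
lemma hopDist_le_graphDist_of_graphDist_le [Finite V] (hw : ∀ a b, a ≠ b → 1 ≤ w a b)
    {t : ℕ} {u v : V} (h : graphDist w u v ≤ t) : hopDist w t u v ≤ graphDist w u v := by
  induction t using Nat.strong_induction_on generalizing u with
  | _ t ih =>
    rcases eq_or_ne u v with rfl | huv
    · simp [hopDist_self]
    obtain ⟨x, hxu, hx⟩ := exists_ne_add_graphDist_eq w huv
    have hstep : graphDist w x v + 1 ≤ t := by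
      rw [add_comm]
      exact (add_le_add_left (hw u x hxu.symm) _).trans (hx.le.trans h)
    cases t with
    | zero => simp at hstep
    | succ t =>
      have hxt : graphDist w x v ≤ t :=
        (ENNReal.add_le_add_iff_right ENNReal.one_ne_top).1 (by exact_mod_cast hstep)
      calc hopDist w (t + 1) u v
          ≤ hopDist w 1 u x + hopDist w t x v := add_comm t 1 ▸ hopDist_add_le w 1 t u x v
        _ ≤ w u x + graphDist w x v := add_le_add (hopDist_one_le w u x) (ih t t.lt_succ_self hxt)
        _ = graphDist w u v := hx

end GraphDist

section Geodesics

variable {V : Type*} {w : V → V → ℝ≥0∞}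

/-- The weight functions of connected undirected graphs without edges of weight zero. -/
structure IsConnectedWeight (w : V → V → ℝ≥0∞) : Prop where
  symm : ∀ a b, w a b = w b a
  pos : ∀ a b, a ≠ b → 0 < w a b
  graphDist_ne_top : ∀ a b, graphDist w a b ≠ ⊤

/-- The graph distance as a real number, for linear arithmetic. It is `0` between vertices that
no path connects, so it is meaningful for connected graphs only. -/
noncomputable def realDist (w : V → V → ℝ≥0∞) (u v : V) : ℝ :=
  (graphDist w u v).toReal

/-- The vertex `p` lies on a shortest path from `x` to `y`. -/
def IsBetween (w : V → V → ℝ≥0∞) (x p y : V) : Prop :=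
  realDist w x p + realDist w p y = realDist w x y

lemma realDist_nonneg (u v : V) : 0 ≤ realDist w u v :=
  ENNReal.toReal_nonneg

lemma realDist_self (u : V) : realDist w u u = 0 := by
  simp [realDist, graphDist_self]

lemma isBetween_left (x y : V) : IsBetween w x x y := by
  simp [IsBetween, realDist_self]

namespace IsConnectedWeight

lemma ofReal_realDist (hw : IsConnectedWeight w) (u v : V) :
    ENNReal.ofReal (realDist w u v) = graphDist w u v :=
  ENNReal.ofReal_toReal (hw.graphDist_ne_top u v)

lemma realDist_comm (hw : IsConnectedWeight w) (u v : V) : realDist w u v = realDist w v u := by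
  rw [realDist, graphDist_comm hw.symm, realDist]

lemma realDist_triangle (hw : IsConnectedWeight w) (x y z : V) :
    realDist w x z ≤ realDist w x y + realDist w y z := by
  have hxy := hw.graphDist_ne_top x y
  have hyz := hw.graphDist_ne_top y z
  rw [realDist, realDist, realDist, ← ENNReal.toReal_add hxy hyz]
  exact ENNReal.toReal_mono (ENNReal.add_ne_top.2 ⟨hxy, hyz⟩) (graphDist_triangle w x y z)

lemma realDist_pos [Finite V] (hw : IsConnectedWeight w) {u v : V} (huv : u ≠ v) :
    0 < realDist w u v := by
  obtain ⟨x, hxu, hx⟩ := exists_ne_add_graphDist_eq w huv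
  have hpos : 0 < graphDist w u v := hx ▸ (hw.pos u x hxu.symm).trans_le le_self_add
  exact ENNReal.toReal_pos hpos.ne' (hw.graphDist_ne_top u v)

lemma exists_isBetween_edge [Finite V] (hw : IsConnectedWeight w) {v y : V} (hvy : v ≠ y) :
    ∃ u, u ≠ v ∧ IsBetween w v u y ∧ w v u = graphDist w v u := by
  obtain ⟨u, huv, hu⟩ := exists_ne_add_graphDist_eq w hvy
  have hedge : w v u = graphDist w v u := by
    refine le_antisymm ?_ (graphDist_le w v u)
    rw [← ENNReal.add_le_add_iff_right (hw.graphDist_ne_top u y), hu]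
    exact graphDist_triangle w v u y
  refine ⟨u, huv, ?_, hedge⟩
  rw [IsBetween, realDist, realDist, realDist,
    ← ENNReal.toReal_add (hw.graphDist_ne_top v u) (hw.graphDist_ne_top u y), ← hedge, hu]

lemma isBetween_trans (hw : IsConnectedWeight w) {x u p y : V} (hu : IsBetween w x u y)
    (hp : IsBetween w u p y) : IsBetween w x p y ∧ IsBetween w x u p := by
  have hxup := hw.realDist_triangle x u p
  have hxpy := hw.realDist_triangle x p y
  unfold IsBetween at *
  constructor <;> linarith

lemma exists_isBetween_dist_le [Finite V] (hw : IsConnectedWeight w) {τ : ℝ} (hτ : 0 ≤ τ)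
    (x y : V) :
    ∃ v, IsBetween w x v y ∧ realDist w x v ≤ τ ∧
      (v = y ∨ ∃ u, IsBetween w x u y ∧ IsBetween w x v u ∧ w v u = graphDist w v u ∧
        τ < realDist w x u) := by
  have : Nonempty {v // IsBetween w x v y ∧ realDist w x v ≤ τ} :=
    ⟨⟨x, isBetween_left x y, by rwa [realDist_self]⟩⟩
  obtain ⟨⟨v, hv, hvτ⟩, hmax⟩ :=
    Finite.exists_max fun v : {v // IsBetween w x v y ∧ realDist w x v ≤ τ} ↦ realDist w x v
  refine ⟨v, hv, hvτ, or_iff_not_imp_left.2 fun hvy ↦ ?_⟩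
  obtain ⟨u, huv, hu, hedge⟩ := hw.exists_isBetween_edge hvy
  obtain ⟨hxuy, hxvu⟩ := hw.isBetween_trans hv hu
  refine ⟨u, hxuy, hxvu, hedge, lt_of_not_ge fun huτ ↦ ?_⟩
  have hle : realDist w x u ≤ realDist w x v := hmax ⟨u, hxuy, huτ⟩
  have hpos := hw.realDist_pos huv.symm
  unfold IsBetween at hxvu
  linarith

end IsConnectedWeight

end Geodesics

section Shortcuts

variable {V : Type*} {w : V → V → ℝ≥0∞} {E : Finset (V × V)}

/-- The weight function of the shortcut graph on the pairs `E`, taken in both directions: each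
shortcut has the length of a shortest path between its ends. The infimum over an empty index type
is `⊤`, a non-edge. -/
noncomputable def shortcut (w : V → V → ℝ≥0∞) (E : Finset (V × V)) (a b : V) : ℝ≥0∞ :=
  ⨅ _ : (a, b) ∈ E ∨ (b, a) ∈ E, graphDist w a b

/-- The graph `w` together with the shortcuts on the pairs `E`. -/
noncomputable def augment (w : V → V → ℝ≥0∞) (E : Finset (V × V)) (a b : V) : ℝ≥0∞ :=
  min (w a b) (shortcut w E a b)

/-- With `t` hops in the augmented graph, `y` can be reached from `x` at length at most `r`.
Requiring `0 ≤ r` makes lengths additive despite the truncation in `ENNReal.ofReal`. -/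
def ReachesWithin (w : V → V → ℝ≥0∞) (E : Finset (V × V)) (t : ℕ) (r : ℝ) (x y : V) : Prop :=
  0 ≤ r ∧ hopDist (augment w E) t x y ≤ ENNReal.ofReal r

lemma augment_comm (hsymm : ∀ a b, w a b = w b a) (a b : V) :
    augment w E a b = augment w E b a := by
  simp only [augment, shortcut, hsymm a b, graphDist_comm hsymm a b, or_comm]

lemma graphDist_le_augment (a b : V) : graphDist w a b ≤ augment w E a b :=
  le_min (graphDist_le w a b) (le_iInf fun _ ↦ le_rfl)

lemma augment_le_graphDist {a b : V} (hab : (a, b) ∈ E) : augment w E a b ≤ graphDist w a b :=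
  (min_le_right _ _).trans (iInf_le _ (Or.inl hab))

lemma ncard_shortcut_ne_top_le : {p : V × V | shortcut w E p.1 p.2 ≠ ⊤}.ncard ≤ 2 * E.card := by
  classical
  have hsub : {p : V × V | shortcut w E p.1 p.2 ≠ ⊤} ⊆
      ((E ∪ E.image Prod.swap : Finset (V × V)) : Set (V × V)) := by
    rintro ⟨a, b⟩ hab
    by_contra hE
    refine hab (iInf_neg fun hmem ↦ hE ?_)
    simpa using hmem
  calc {p : V × V | shortcut w E p.1 p.2 ≠ ⊤}.ncard
      ≤ (E ∪ E.image Prod.swap : Finset (V × V)).card := by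
        simpa only [Set.ncard_coe_finset] using Set.ncard_le_ncard hsub
    _ ≤ E.card + (E.image Prod.swap).card :=
        Finset.card_union_le _ _
    _ ≤ 2 * E.card := two_mul E.card ▸ Nat.add_le_add_left Finset.card_image_le _

namespace ReachesWithin

variable {s t : ℕ} {r r' : ℝ} {x y z : V}

lemma refl (x : V) : ReachesWithin w E 0 0 x x :=
  ⟨le_rfl, by simp [hopDist_self]⟩

lemma mono (h : ReachesWithin w E s r x y) (hst : s ≤ t) (hr : r ≤ r') :
    ReachesWithin w E t r' x y :=
  ⟨h.1.trans hr, (hopDist_anti _ hst x y).trans (h.2.trans (ENNReal.ofReal_le_ofReal hr))⟩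

lemma symm (hsymm : ∀ a b, w a b = w b a) (h : ReachesWithin w E t r x y) :
    ReachesWithin w E t r y x :=
  ⟨h.1, hopDist_comm (augment_comm hsymm) t x y ▸ h.2⟩

lemma trans (h : ReachesWithin w E s r x y) (h' : ReachesWithin w E t r' y z) :
    ReachesWithin w E (s + t) (r + r') x z := by
  refine ⟨add_nonneg h.1 h'.1, ?_⟩
  rw [ENNReal.ofReal_add h.1 h'.1]
  exact (hopDist_add_le _ s t x y z).trans (add_le_add h.2 h'.2)

lemma of_augment_le (hw : IsConnectedWeight w) (h : augment w E x y ≤ graphDist w x y) :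
    ReachesWithin w E 1 (realDist w x y) x y :=
  ⟨realDist_nonneg x y, hw.ofReal_realDist x y ▸ (hopDist_one_le _ x y).trans h⟩

lemma of_edge (hw : IsConnectedWeight w) (h : w x y = graphDist w x y) :
    ReachesWithin w E 1 (realDist w x y) x y :=
  of_augment_le hw ((min_le_left _ _).trans h.le)

lemma of_mem (hw : IsConnectedWeight w) (h : (x, y) ∈ E) :
    ReachesWithin w E 1 (realDist w x y) x y :=
  of_augment_le hw (augment_le_graphDist h)

lemma realDist_le (h : ReachesWithin w E t r x y) : realDist w x y ≤ r :=
  ENNReal.toReal_le_of_le_ofReal h.1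
    ((graphDist_le_hopDist_of_graphDist_le graphDist_le_augment t x y).trans h.2)

end ReachesWithin

end Shortcuts

section Routing

variable {V : Type*} {w : V → V → ℝ≥0∞} {E : Finset (V × V)}

/-- Any two vertices of `A` are joined by a pair of `E`, unless the first one has in `E` a pair
with an element of `B` (a pivot) that is no farther away than the second one. -/
def IsPivotCover {α R : Type*} [LE R] (D : α → α → R) (E : Finset (α × α)) (A B : Finset α) :
    Prop :=
  ∀ x ∈ A, ∀ y ∈ A, (x, y) ∈ E ∨ ∃ z ∈ B, (x, z) ∈ E ∧ D x z ≤ D x y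

lemma IsPivotCover.mono_edges {α R : Type*} [LE R] {D : α → α → R} {E F : Finset (α × α)}
    {A B : Finset α} (hE : IsPivotCover D E A B) (hEF : E ⊆ F) : IsPivotCover D F A B :=
  fun x hx y hy ↦
    (hE x hx y hy).imp (@hEF _) fun ⟨z, hz, hxz, hle⟩ ↦ ⟨z, hz, hEF hxz, hle⟩

/-- From every `x`, with `h` hops in the augmented graph, each `y` is reached with stretch `1 + η`
unless an element of `A` is reached within twice the distance from `x` to `y`. -/
def StretchOrPivot (w : V → V → ℝ≥0∞) (E : Finset (V × V)) (h : ℕ) (η : ℝ) (A : Finset V) : Prop :=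
  ∀ x y, ReachesWithin w E h ((1 + η) * realDist w x y) x y ∨
    ∃ z ∈ A, ReachesWithin w E h (2 * realDist w x y) x z

namespace StretchOrPivot

variable {h S : ℕ} {η τ : ℝ} {A B : Finset V} {x y : V}

lemma mono_hops {h' : ℕ} (hA : StretchOrPivot w E h η A) (hh : h ≤ h') :
    StretchOrPivot w E h' η A := fun x y ↦
  (hA x y).imp (·.mono hh le_rfl) fun ⟨z, hz, hxz⟩ ↦ ⟨z, hz, hxz.mono hh le_rfl⟩

lemma of_isPivotCover_univ [Fintype V] (hw : IsConnectedWeight w)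
    (hE : IsPivotCover (realDist w) E Finset.univ A) : StretchOrPivot w E 1 0 A := by
  intro x y
  rcases hE x (Finset.mem_univ x) y (Finset.mem_univ y) with hxy | ⟨z, hz, hxz, hle⟩
  · exact .inl (by simpa using ReachesWithin.of_mem hw hxy)
  · refine .inr ⟨z, hz, (ReachesWithin.of_mem hw hxz).mono le_rfl ?_⟩
    linarith [realDist_nonneg (w := w) x y]

lemma reaches_or_pivot_or_advance [Finite V] (hA : StretchOrPivot w E h η A)
    (hw : IsConnectedWeight w) (hη : 0 ≤ η) (hτ : 0 ≤ τ) (x y : V) :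
    ReachesWithin w E h ((1 + η) * realDist w x y) x y ∨
      (∃ z ∈ A, ReachesWithin w E h (2 * τ) x z) ∨
      ∃ u, IsBetween w x u y ∧ τ ≤ realDist w x u ∧
        ReachesWithin w E (h + 1) ((1 + η) * realDist w x u) x u := by
  obtain ⟨v, -, hvτ, hv⟩ := hw.exists_isBetween_dist_le hτ x y
  rcases hA x v with hxv | ⟨z, hz, hxz⟩
  · rcases hv with rfl | ⟨u, hxuy, hxvu, hedge, hτu⟩
    · exact .inl hxv
    · refine .inr (.inr ⟨u, hxuy, hτu.le, (hxv.trans (.of_edge hw hedge)).mono le_rfl ?_⟩)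
      rw [← hxvu]
      nlinarith [mul_nonneg hη (realDist_nonneg (w := w) v u)]
  · exact .inr (.inl ⟨z, hz, hxz.mono le_rfl (by linarith)⟩)

lemma reaches_or_blocked [Finite V] (hA : StretchOrPivot w E h η A)
    (hw : IsConnectedWeight w) (hη : 0 ≤ η) (hτ : 0 ≤ τ) (hS : realDist w x y ≤ S * τ) :
    ReachesWithin w E (S * (h + 1)) ((1 + η) * realDist w x y) x y ∨
      ∃ p, IsBetween w x p y ∧
        ReachesWithin w E (S * (h + 1)) ((1 + η) * realDist w x p) x p ∧
        ∃ z ∈ A, ReachesWithin w E h (2 * τ) p z := by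
  induction S generalizing x with
  | zero =>
    have hxy : x = y := by
      by_contra hne
      have := hw.realDist_pos hne
      simp only [Nat.cast_zero, zero_mul] at hS
      linarith
    subst hxy
    exact .inl (by simpa [realDist_self] using ReachesWithin.refl x)
  | succ S ih =>
    rcases hA.reaches_or_pivot_or_advance hw hη hτ x y with
      hxy | ⟨z, hz, hxz⟩ | ⟨u, hxuy, hτu, hxu⟩
    · exact .inl (hxy.mono (by rw [Nat.succ_mul]; omega) le_rfl)
    · refine .inr ⟨x, isBetween_left x y, ?_, z, hz, hxz⟩
      exact (ReachesWithin.refl x).mono (Nat.zero_le _) (by simp [realDist_self])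
    · have hhops : h + 1 + S * (h + 1) ≤ (S + 1) * (h + 1) := by rw [Nat.succ_mul, add_comm]
      have huy : realDist w u y ≤ S * τ := by
        push_cast at hS
        unfold IsBetween at hxuy
        linarith
      rcases ih huy with huy | ⟨p, hupy, hup, hpivot⟩
      · refine .inl ((hxu.trans huy).mono hhops ?_)
        rw [← mul_add, hxuy]
      · obtain ⟨hxpy, hxup⟩ := hw.isBetween_trans hxuy hupy
        refine .inr ⟨p, hxpy, (hxu.trans hup).mono hhops ?_, hpivot⟩
        rw [← mul_add, hxup]

-- Advance from both ends; if both searches are blocked, each has a pivot within `2 * τ`.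
lemma reaches_or_pivots_at_both_ends [Finite V] (hA : StretchOrPivot w E h η A)
    (hw : IsConnectedWeight w) (hη : 0 ≤ η) (hτ : 0 ≤ τ) (hS : realDist w x y ≤ S * τ) :
    ReachesWithin w E (2 * (S * (h + 1))) ((1 + η) * realDist w x y) x y ∨
      ∃ z ∈ A, ∃ z' ∈ A, ∃ r r' : ℝ,
        ReachesWithin w E (S * (h + 1) + h) r x z ∧ ReachesWithin w E (S * (h + 1) + h) r' y z' ∧
        r + realDist w z z' + r' ≤ (1 + η) * realDist w x y + 8 * τ := by
  rcases hA.reaches_or_blocked hw hη hτ hS with hxy | ⟨p, hp, hxp, z, hz, hpz⟩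
  · exact .inl (hxy.mono (by omega) le_rfl)
  have hyp : realDist w y p ≤ S * τ := by
    rw [hw.realDist_comm]
    unfold IsBetween at hp
    linarith [realDist_nonneg (w := w) x p]
  rcases hA.reaches_or_blocked hw hη hτ hyp with hyp | ⟨p', hp', hyp', z', hz', hpz'⟩
  · refine .inl ((hxp.trans (hyp.symm hw.symm)).mono (by omega) ?_)
    rw [hw.realDist_comm y p, ← mul_add, hp]
  refine .inr ⟨z, hz, z', hz', _, _, hxp.trans hpz, hyp'.trans hpz', ?_⟩
  have hzz' : realDist w z z' ≤ realDist w p' p + 4 * τ := by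
    have hzp := hpz.realDist_le
    have hpz' := hpz'.realDist_le
    rw [hw.realDist_comm p z] at hzp
    rw [hw.realDist_comm p' p]
    linarith [hw.realDist_triangle z p z', hw.realDist_triangle p p' z']
  have hsum : realDist w x p + realDist w p' p + realDist w y p' = realDist w x y := by
    rw [← hp, hw.realDist_comm p y, ← hp']
    ring
  rw [← hsum]
  linarith [mul_nonneg hη (realDist_nonneg (w := w) p' p)]

lemma step [Finite V] (hA : StretchOrPivot w E h η A) (hw : IsConnectedWeight w) (hη : 0 ≤ η)
    (hS : 0 < S) (hηS : η + 8 / S ≤ 1) (hE : IsPivotCover (realDist w) E A B) :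
    StretchOrPivot w E (2 * (S * (h + 1) + h) + 1) (η + 8 / S) B := by
  intro x y
  have hxy := realDist_nonneg (w := w) x y
  set τ := realDist w x y / S with hτ_def
  have hτ : 0 ≤ τ := by positivity
  have hSτ : realDist w x y = S * τ := by rw [hτ_def]; field_simp
  have hstretch : (1 + η) * realDist w x y + 8 * τ = (1 + (η + 8 / S)) * realDist w x y := by
    rw [hτ_def]; ring
  have hstretch_le : (1 + (η + 8 / S)) * realDist w x y ≤ 2 * realDist w x y := by
    gcongr; linarith
  rcases hA.reaches_or_pivots_at_both_ends hw hη hτ hSτ.le with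
    hreach | ⟨z, hz, z', hz', r, r', hxz, hyz', hlen⟩
  · exact .inl (hreach.mono (by omega) (by linarith))
  rw [hstretch] at hlen
  rcases hE z hz z' hz' with hzz' | ⟨q, hq, hzq, hle⟩
  · exact .inl (((hxz.trans (.of_mem hw hzz')).trans (hyz'.symm hw.symm)).mono (by omega) hlen)
  · refine .inr ⟨q, hq, (hxz.trans (.of_mem hw hzq)).mono (by omega) ?_⟩
    linarith [hyz'.1]

lemma of_pivot_levels [Fintype V] (hw : IsConnectedWeight w) {A : ℕ → Finset V}
    (hA₀ : A 0 = Finset.univ) (hE : ∀ i, IsPivotCover (realDist w) E (A i) (A (i + 1)))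
    {i : ℕ} (hi : 8 * i ≤ S) : StretchOrPivot w E ((7 * S) ^ i) (8 * i / S) (A (i + 1)) := by
  induction i with
  | zero => simpa using of_isPivotCover_univ hw (hA₀ ▸ hE 0)
  | succ i ih =>
    have hS : 0 < S := by omega
    have hstretch : 8 * ((i + 1 : ℕ) : ℝ) / S = 8 * i / S + 8 / S := by push_cast; ring
    have hle_one : 8 * (i : ℝ) / S + 8 / S ≤ 1 := by
      rw [← hstretch, div_le_one (by positivity)]
      exact_mod_cast hi
    have hhops : 2 * (S * ((7 * S) ^ i + 1) + (7 * S) ^ i) + 1 ≤ (7 * S) ^ (i + 1) := by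
      have : 1 ≤ (7 * S) ^ i := Nat.one_le_pow _ _ (by omega)
      rw [pow_succ]
      nlinarith
    rw [hstretch]
    exact ((ih (by omega)).step hw (by positivity) hS hle_one (hE (i + 1))).mono_hops hhops

end StretchOrPivot

end Routing

section Sampling

variable {α R : Type*} [LinearOrder R]

lemma succ_mul_pow_add_pow_le (a m : ℕ) : (m + 1) * a ^ m + a ^ (m + 1) ≤ (a + 1) ^ (m + 1) := by
  induction m with
  | zero => simp [add_comm]
  | succ m ih =>
    calc (m + 1 + 1) * a ^ (m + 1) + a ^ (m + 1 + 1)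
        = ((m + 1) * a ^ m + a ^ (m + 1)) * a + a ^ (m + 1) := by ring
      _ ≤ (a + 1) ^ (m + 1) * a + (a + 1) ^ (m + 1) := by gcongr; omega
      _ = (a + 1) ^ (m + 1 + 1) := by ring

lemma succ_mul_sum_card_filter_lt_pow_le (f : α → R) (m : ℕ) (A : Finset α) :
    (m + 1) * ∑ y ∈ A, (A.filter (f y < f ·)).card ^ m ≤ A.card ^ (m + 1) := by
  classical
  induction A using Finset.induction_on_min_value f with
  | empty => simp
  | insert a s ha hmin ih =>
    have hfilter_a : ((insert a s).filter (f a < f ·)).card ≤ s.card := by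
      rw [Finset.filter_insert, if_neg (lt_irrefl _)]
      exact Finset.card_filter_le _ _
    have hfilter : ∀ y ∈ s, (insert a s).filter (f y < f ·) = s.filter (f y < f ·) :=
      fun y hy ↦ by rw [Finset.filter_insert, if_neg (hmin y hy).not_gt]
    calc (m + 1) * ∑ y ∈ insert a s, ((insert a s).filter (f y < f ·)).card ^ m
        = (m + 1) * ((insert a s).filter (f a < f ·)).card ^ m
          + (m + 1) * ∑ y ∈ s, (s.filter (f y < f ·)).card ^ m := by
          rw [Finset.sum_insert ha, mul_add]
          congr 2
          exact Finset.sum_congr rfl fun y hy ↦ by rw [hfilter y hy]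
      _ ≤ (m + 1) * s.card ^ m + s.card ^ (m + 1) := by gcongr
      _ ≤ (s.card + 1) ^ (m + 1) := succ_mul_pow_add_pow_le _ _
      _ = (insert a s).card ^ (m + 1) := by rw [Finset.card_insert_of_notMem ha]

/-- The pairs of `A` whose second element is strictly closer to the first one than the whole
sample `g`. A sample is a tuple, so that sampling with repetition is uniform over `Fin m → α`. -/
def closePairs (D : α → α → R) (A : Finset α) {m : ℕ} (g : Fin m → α) : Finset (α × α) :=
  (A ×ˢ A).filter fun p ↦ ∀ j, D p.1 p.2 < D p.1 (g j)

lemma sum_card_closePairs (D : α → α → R) (A : Finset α) (m : ℕ) :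
    ∑ g ∈ Fintype.piFinset fun _ : Fin m ↦ A, (closePairs D A g).card =
      ∑ x ∈ A, ∑ y ∈ A, (A.filter (D x y < D x ·)).card ^ m := by
  classical
  simp only [closePairs, Finset.card_filter]
  rw [Finset.sum_comm, Finset.sum_product]
  refine Finset.sum_congr rfl fun x _ ↦ Finset.sum_congr rfl fun y _ ↦ ?_
  have hfilter : ((Fintype.piFinset fun _ : Fin m ↦ A).filter fun g ↦ ∀ j, D x y < D x (g j)) =
      Fintype.piFinset fun _ : Fin m ↦ A.filter (D x y < D x ·) := by
    ext g
    simp [Fintype.mem_piFinset, forall_and]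
  rw [← Finset.card_filter, ← Finset.card_filter, hfilter, Fintype.card_piFinset_const]

-- The average of `(closePairs D A g).card` over uniform samples is at most `|A|² / (m + 1)`.
lemma exists_succ_mul_card_closePairs_le (D : α → α → R) {A : Finset α} (hA : A.Nonempty)
    (m : ℕ) : ∃ g : Fin m → α, (m + 1) * (closePairs D A g).card ≤ A.card ^ 2 := by
  classical
  have hne : (Fintype.piFinset fun _ : Fin m ↦ A).Nonempty :=
    Fintype.piFinset_nonempty.2 fun _ ↦ hA
  have haverage : ∑ g ∈ Fintype.piFinset fun _ : Fin m ↦ A, (m + 1) * (closePairs D A g).card ≤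
      ∑ _ ∈ Fintype.piFinset fun _ : Fin m ↦ A, A.card ^ 2 := by
    rw [← Finset.mul_sum, sum_card_closePairs, Finset.mul_sum, Finset.sum_const,
      Fintype.card_piFinset_const, smul_eq_mul]
    calc ∑ x ∈ A, (m + 1) * ∑ y ∈ A, (A.filter (D x y < D x ·)).card ^ m
        ≤ ∑ _ ∈ A, A.card ^ (m + 1) :=
          Finset.sum_le_sum fun x _ ↦ succ_mul_sum_card_filter_lt_pow_le (D x) m A
      _ = A.card ^ m * A.card ^ 2 := by rw [Finset.sum_const, smul_eq_mul]; ring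
  obtain ⟨g, -, hg⟩ := Finset.exists_le_of_sum_le hne haverage
  exact ⟨g, hg⟩

lemma exists_isPivotCover (D : α → α → R) (A : Finset α) {m : ℕ} (hm : 0 < m) :
    ∃ (B : Finset α) (E : Finset (α × α)), B.card ≤ m ∧
      (m + 1) * E.card ≤ A.card ^ 2 + (m + 1) * A.card ∧ IsPivotCover D E A B := by
  classical
  rcases A.eq_empty_or_nonempty with rfl | hA
  · exact ⟨∅, ∅, by simp, by simp, by simp [IsPivotCover]⟩
  obtain ⟨g, hg⟩ := exists_succ_mul_card_closePairs_le D hA m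
  have : Nonempty (Fin m) := ⟨⟨0, hm⟩⟩
  choose nearest hnearest using fun x ↦ Finite.exists_min fun j ↦ D x (g j)
  refine ⟨Finset.univ.image g, closePairs D A g ∪ A.image fun x ↦ (x, g (nearest x)),
    Finset.card_image_le.trans (by simp), ?_, fun x hx y hy ↦ ?_⟩
  · calc (m + 1) * (closePairs D A g ∪ A.image fun x ↦ (x, g (nearest x))).card
        ≤ (m + 1) * ((closePairs D A g).card + A.card) := by
          gcongr
          exact (Finset.card_union_le _ _).trans (Nat.add_le_add_left Finset.card_image_le _)
      _ ≤ A.card ^ 2 + (m + 1) * A.card := by rw [mul_add]; gcongr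
  · by_cases hclose : ∀ j, D x y < D x (g j)
    · exact .inl (Finset.mem_union_left _ (by simp [closePairs, hx, hy, hclose]))
    · push Not at hclose
      obtain ⟨j, hj⟩ := hclose
      exact .inr ⟨g (nearest x), by simp,
        Finset.mem_union_right _ (Finset.mem_image_of_mem _ hx), (hnearest x j).trans hj⟩

lemma exists_pivot_levels (D : α → α → R) (ℓ : ℕ) {m : ℕ → ℕ} (hm : ∀ i, 0 < m i)
    {A₀ : Finset α} (hA₀ : A₀.card ≤ m 0) :
    ∃ (A : ℕ → Finset α) (E : Finset (α × α)), A 0 = A₀ ∧ A (ℓ + 1) = ∅ ∧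
      (∀ i, IsPivotCover D E (A i) (A (i + 1))) ∧
      (E.card : ℝ) ≤
        ∑ i ∈ Finset.range ℓ, ((m i : ℝ) ^ 2 / (m (i + 1) + 1) + m i) + (m ℓ : ℝ) ^ 2 := by
  classical
  induction ℓ generalizing m A₀ with
  | zero =>
    refine ⟨fun i ↦ if i = 0 then A₀ else ∅, A₀ ×ˢ A₀, by simp, by simp, fun i x hx y hy ↦ ?_, ?_⟩
    · rcases eq_or_ne i 0 with rfl | hi
      · exact .inl (Finset.mem_product.2 ⟨hx, hy⟩)
      · simp [hi] at hx
    · rw [Finset.card_product, Finset.sum_range_zero, zero_add, sq]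
      exact_mod_cast Nat.mul_le_mul hA₀ hA₀
  | succ ℓ ih =>
    obtain ⟨B, F, hB, hF, hcover⟩ := exists_isPivotCover D A₀ (hm 1)
    obtain ⟨A, E, rfl, hlast, hA, hE⟩ := ih (m := fun i ↦ m (i + 1)) (fun i ↦ hm _) hB
    refine ⟨fun i ↦ Nat.casesOn i A₀ A, F ∪ E, rfl, hlast, ?_, ?_⟩
    · rintro (_ | i)
      · exact hcover.mono_edges Finset.subset_union_left
      · exact (hA i).mono_edges Finset.subset_union_right
    · have hF' : (F.card : ℝ) ≤ (m 0 : ℝ) ^ 2 / (m 1 + 1) + m 0 := by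
        have hF' : ((m 1 : ℝ) + 1) * F.card ≤ (A₀.card : ℝ) ^ 2 + (m 1 + 1) * A₀.card := by
          exact_mod_cast hF
        calc (F.card : ℝ) ≤ ((A₀.card : ℝ) ^ 2 + (m 1 + 1) * A₀.card) / (m 1 + 1) := by
              rwa [le_div_iff₀' (by positivity)]
          _ = (A₀.card : ℝ) ^ 2 / (m 1 + 1) + A₀.card := by field_simp
          _ ≤ (m 0 : ℝ) ^ 2 / (m 1 + 1) + m 0 := by gcongr
      have hunion : ((F ∪ E).card : ℝ) ≤ F.card + E.card := by
        exact_mod_cast Finset.card_union_le F E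
      rw [Finset.sum_range_succ']
      linarith

end Sampling

section LevelSizes

/-- The exponent `e i` for which the `i`-th level gets `n ^ e i` vertices. By the recursion
`2 * e i = (1 + 1 / (2 ^ (ℓ + 1) - 1)) + e (i + 1)` every level contributes about as many pairs. -/
noncomputable def levelExponent (ℓ i : ℕ) : ℝ :=
  (2 ^ (ℓ + 1) - 2 ^ i) / (2 ^ (ℓ + 1) - 1)

/-- The size of the `i`-th of `ℓ + 1` levels on `n` vertices. -/
noncomputable def levelSize (n ℓ i : ℕ) : ℕ :=
  ⌈(n : ℝ) ^ levelExponent ℓ i⌉₊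

variable {n ℓ i : ℕ}

lemma one_le_two_pow_succ_sub_one (ℓ : ℕ) : (1 : ℝ) ≤ 2 ^ (ℓ + 1) - 1 := by
  have : (1 : ℝ) ≤ 2 ^ ℓ := one_le_pow₀ one_le_two
  rw [pow_succ]
  linarith

lemma levelExponent_zero (ℓ : ℕ) : levelExponent ℓ 0 = 1 := by
  rw [levelExponent, pow_zero, div_self (by linarith [one_le_two_pow_succ_sub_one ℓ])]

lemma levelExponent_nonneg (hi : i ≤ ℓ + 1) : 0 ≤ levelExponent ℓ i :=
  div_nonneg (sub_nonneg.2 (pow_le_pow_right₀ one_le_two hi))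
    (by linarith [one_le_two_pow_succ_sub_one ℓ])

lemma levelExponent_le_one (ℓ i : ℕ) : levelExponent ℓ i ≤ 1 :=
  div_le_one_of_le₀ (sub_le_sub_left (one_le_pow₀ one_le_two) _)
    (by linarith [one_le_two_pow_succ_sub_one ℓ])

lemma two_mul_levelExponent (ℓ i : ℕ) :
    2 * levelExponent ℓ i = 1 + 1 / (2 ^ (ℓ + 1) - 1) + levelExponent ℓ (i + 1) := by
  have : (2 : ℝ) ^ (ℓ + 1) - 1 ≠ 0 := by linarith [one_le_two_pow_succ_sub_one ℓ]
  rw [levelExponent, levelExponent, pow_succ 2 i]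
  field_simp
  ring

lemma levelSize_pos (hn : 0 < n) (ℓ i : ℕ) : 0 < levelSize n ℓ i :=
  Nat.ceil_pos.2 (by positivity)

lemma levelSize_zero (n ℓ : ℕ) : levelSize n ℓ 0 = n := by
  simp [levelSize, levelExponent_zero]

lemma levelSize_le (hn : 0 < n) (ℓ i : ℕ) : levelSize n ℓ i ≤ n :=
  Nat.ceil_le.2 <| Real.rpow_le_self_of_one_le (Nat.one_le_cast.2 hn) (levelExponent_le_one ℓ i)

lemma levelSize_sq_le (hn : 0 < n) (hi : i ≤ ℓ + 1) :
    (levelSize n ℓ i : ℝ) ^ 2 ≤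
      4 * (n : ℝ) ^ (1 + 1 / ((2 : ℝ) ^ (ℓ + 1) - 1)) * (n : ℝ) ^ levelExponent ℓ (i + 1) := by
  have hn' : (0 : ℝ) < n := Nat.cast_pos.2 hn
  have hle : (levelSize n ℓ i : ℝ) ≤ 2 * (n : ℝ) ^ levelExponent ℓ i := by
    have hone : 1 ≤ (n : ℝ) ^ levelExponent ℓ i :=
      Real.one_le_rpow (Nat.one_le_cast.2 hn) (levelExponent_nonneg hi)
    have hceil : (levelSize n ℓ i : ℝ) < (n : ℝ) ^ levelExponent ℓ i + 1 :=
      Nat.ceil_lt_add_one (by positivity)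
    linarith
  calc (levelSize n ℓ i : ℝ) ^ 2 ≤ (2 * (n : ℝ) ^ levelExponent ℓ i) ^ 2 := by gcongr
    _ = 4 * (n : ℝ) ^ (2 * levelExponent ℓ i) := by
        rw [two_mul (levelExponent ℓ i), Real.rpow_add hn']; ring
    _ = _ := by rw [two_mul_levelExponent, Real.rpow_add hn', mul_assoc]

lemma levelSize_sq_div_add_le (hn : 0 < n) (hi : i ≤ ℓ + 1) :
    (levelSize n ℓ i : ℝ) ^ 2 / (levelSize n ℓ (i + 1) + 1) + levelSize n ℓ i ≤
      5 * (n : ℝ) ^ (1 + 1 / ((2 : ℝ) ^ (ℓ + 1) - 1)) := by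
  have hK := one_le_two_pow_succ_sub_one ℓ
  set N : ℝ := (n : ℝ) ^ (1 + 1 / ((2 : ℝ) ^ (ℓ + 1) - 1))
  have hsq : (levelSize n ℓ i : ℝ) ^ 2 / (levelSize n ℓ (i + 1) + 1) ≤ 4 * N := by
    rw [div_le_iff₀ (by positivity)]
    refine (levelSize_sq_le hn hi).trans ?_
    gcongr
    exact (Nat.le_ceil _).trans (le_add_of_nonneg_right zero_le_one)
  have hlin : (levelSize n ℓ i : ℝ) ≤ N := by
    calc (levelSize n ℓ i : ℝ) ≤ n := Nat.cast_le.2 (levelSize_le hn ℓ i)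
      _ ≤ N := Real.self_le_rpow_of_one_le (Nat.one_le_cast.2 hn)
        (le_add_of_nonneg_right (one_div_nonneg.2 (by linarith)))
  linarith

lemma sum_levelSize_le (hn : 0 < n) (ℓ : ℕ) :
    ∑ i ∈ Finset.range ℓ,
        ((levelSize n ℓ i : ℝ) ^ 2 / (levelSize n ℓ (i + 1) + 1) + levelSize n ℓ i) +
      (levelSize n ℓ ℓ : ℝ) ^ 2 ≤
      5 * (ℓ + 1) * (n : ℝ) ^ (1 + 1 / ((2 : ℝ) ^ (ℓ + 1) - 1)) := by
  set N : ℝ := (n : ℝ) ^ (1 + 1 / ((2 : ℝ) ^ (ℓ + 1) - 1))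
  have hlast : (levelSize n ℓ ℓ : ℝ) ^ 2 ≤ 4 * N := by
    have hexp : levelExponent ℓ (ℓ + 1) = 0 := by simp [levelExponent]
    simpa only [hexp, Real.rpow_zero, mul_one] using levelSize_sq_le hn ℓ.le_succ
  have hsum : ∑ i ∈ Finset.range ℓ,
      ((levelSize n ℓ i : ℝ) ^ 2 / (levelSize n ℓ (i + 1) + 1) + levelSize n ℓ i) ≤
      ℓ * (5 * N) := by
    simpa only [Finset.card_range, nsmul_eq_mul] using
      Finset.sum_le_card_nsmul (Finset.range ℓ) _ _ fun i hi ↦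
        levelSize_sq_div_add_le hn ((Finset.mem_range.1 hi).le.trans ℓ.le_succ)
  have hN : 0 ≤ N := by positivity
  linarith

end LevelSizes

section Hopsets

variable {V : Type*} {w : V → V → ℝ≥0∞}

/-- The weight function `wH` is a `(1 + ε, β)`-hopset for `w`. -/
def IsHopset (w wH : V → V → ℝ≥0∞) (ε : ℝ) (β : ℕ) : Prop :=
  ∀ u v, graphDist w u v ≤ hopDist (fun a b ↦ min (w a b) (wH a b)) β u v ∧
    hopDist (fun a b ↦ min (w a b) (wH a b)) β u v ≤ ENNReal.ofReal (1 + ε) * graphDist w u v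

lemma isHopset_top_of_graphDist_le [Finite V] (hw : ∀ a b, a ≠ b → 1 ≤ w a b) {ε : ℝ}
    (hε : 0 ≤ ε) {β : ℕ} (hβ : ∀ u v, graphDist w u v ≤ β) : IsHopset w (fun _ _ ↦ ⊤) ε β := by
  intro u v
  simp only [min_top_right]
  refine ⟨graphDist_le_hopDist w β u v, ?_⟩
  calc hopDist w β u v ≤ graphDist w u v := hopDist_le_graphDist_of_graphDist_le hw (hβ u v)
    _ ≤ ENNReal.ofReal (1 + ε) * graphDist w u v :=
        le_mul_of_one_le_left' (ENNReal.one_le_ofReal.2 (by linarith))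

lemma isHopset_shortcut_of_stretchOrPivot_empty (hw : IsConnectedWeight w)
    {E : Finset (V × V)} {h β : ℕ} {η ε : ℝ} (hE : StretchOrPivot w E h η ∅) (hη : 0 ≤ η)
    (hηε : η ≤ ε) (hβ : h ≤ β) : IsHopset w (shortcut w E) ε β := by
  intro u v
  refine ⟨graphDist_le_hopDist_of_graphDist_le graphDist_le_augment β u v, ?_⟩
  rcases hE u v with huv | ⟨z, hz, -⟩
  · calc hopDist (augment w E) β u v
        ≤ ENNReal.ofReal ((1 + ε) * realDist w u v) :=
          (huv.mono hβ (by gcongr; exact realDist_nonneg u v)).2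
      _ = ENNReal.ofReal (1 + ε) * graphDist w u v := by
          rw [ENNReal.ofReal_mul (by linarith), hw.ofReal_realDist]
  · exact absurd hz (Finset.notMem_empty z)

lemma exists_segment_count {ε : ℝ} (hε : 0 < ε) (hε₁ : ε ≤ 1) (ℓ : ℕ) :
    ∃ S : ℕ, 8 * ℓ ≤ S ∧ 8 * (ℓ : ℝ) / S ≤ ε ∧ (7 * (S : ℝ)) ^ ℓ ≤ (64 * ℓ / ε) ^ ℓ := by
  rcases ℓ.eq_zero_or_pos with rfl | hℓ
  · exact ⟨0, by simp, by simpa using hε.le, by simp⟩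
  have hℓ' : (1 : ℝ) ≤ ℓ := Nat.one_le_cast.2 hℓ
  have hℓε : (ℓ : ℝ) ≤ ℓ / ε := le_div_self (by linarith) hε hε₁
  have hS : 8 * (ℓ / ε) ≤ (⌈8 * (ℓ / ε)⌉₊ : ℝ) := Nat.le_ceil _
  refine ⟨⌈8 * (ℓ / ε)⌉₊, ?_, ?_, ?_⟩
  · exact_mod_cast (by linarith : 8 * (ℓ : ℝ) ≤ ⌈8 * (ℓ / ε)⌉₊)
  · rwa [div_le_comm₀ (by linarith) hε, mul_div_assoc]
  · have hlt : (⌈8 * (ℓ / ε)⌉₊ : ℝ) < 8 * (ℓ / ε) + 1 := Nat.ceil_lt_add_one (by positivity)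
    gcongr
    rw [mul_div_assoc]
    linarith

theorem exists_isHopset [Fintype V] [Nonempty V] (hw : IsConnectedWeight w) {ε : ℝ} (hε : 0 < ε)
    (hε₁ : ε ≤ 1) (ℓ : ℕ) :
    ∃ wH : V → V → ℝ≥0∞,
      ({p : V × V | wH p.1 p.2 ≠ ⊤}.ncard : ℝ) ≤
        10 * (ℓ + 1) * (Fintype.card V : ℝ) ^ (1 + 1 / ((2 : ℝ) ^ (ℓ + 1) - 1)) ∧
      ∀ β : ℕ, (64 * ℓ / ε) ^ ℓ ≤ β → IsHopset w wH ε β := by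
  have hn : 0 < Fintype.card V := Fintype.card_pos
  obtain ⟨A, E, hA₀, hlast, hcover, hcard⟩ :=
    exists_pivot_levels (realDist w) ℓ (levelSize_pos hn ℓ) (A₀ := Finset.univ)
      (levelSize_zero (Fintype.card V) ℓ).ge
  obtain ⟨S, hS, hSε, hSpow⟩ := exists_segment_count hε hε₁ ℓ
  refine ⟨shortcut w E, ?_, fun β hβ ↦ ?_⟩
  · have hncard : ({p : V × V | shortcut w E p.1 p.2 ≠ ⊤}.ncard : ℝ) ≤ 2 * E.card := by
      exact_mod_cast ncard_shortcut_ne_top_le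
    linarith [sum_levelSize_le hn ℓ]
  · have hstretch := StretchOrPivot.of_pivot_levels hw hA₀ hcover hS
    rw [hlast] at hstretch
    exact isHopset_shortcut_of_stretchOrPivot_empty hw hstretch (by positivity) hSε
      (by exact_mod_cast hSpow.trans hβ)

end Hopsets

section Parameters

/-- The number `ℓ` of the hopset theorem, as a function of `κ` and `ρ`. -/
noncomputable def numLevels (κ ρ : ℝ) : ℕ :=
  ⌊Real.logb 2 (κ * ρ)⌋₊ + ⌈(κ + 1) / (κ * ρ)⌉₊ - 1

/-- The base of the power defining the hop bound `β` of the hopset theorem, with `c = 2 ^ 20`, and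
with `a`, `b` standing for the logarithms of the aspect ratio and of the number of vertices. -/
noncomputable def hopBase (a b κ ρ ε : ℝ) : ℝ :=
  2 ^ 20 * a * b * (Real.logb 2 (κ * ρ) + 1 / ρ) / ε

variable {κ ρ ε a b : ℝ}

lemma one_le_logb_two {x : ℝ} (hx : 2 ≤ x) : 1 ≤ Real.logb 2 x := by
  rwa [Real.le_logb_iff_rpow_le one_lt_two (by linarith), Real.rpow_one]

lemma numLevels_pos (hκ : 1 ≤ κ) (hκρ : 1 ≤ κ * ρ) : 0 < numLevels κ ρ := by
  have hκρ_pos : 0 < κ * ρ := zero_lt_one.trans_le hκρ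
  suffices hlevels : 2 ≤ ⌊Real.logb 2 (κ * ρ)⌋₊ + ⌈(κ + 1) / (κ * ρ)⌉₊ by
    unfold numLevels
    omega
  rcases le_or_gt 2 (κ * ρ) with htwo | htwo
  · have hfloor : 1 ≤ ⌊Real.logb 2 (κ * ρ)⌋₊ :=
      Nat.one_le_floor_iff _ |>.2 (one_le_logb_two htwo)
    have hceil : 0 < ⌈(κ + 1) / (κ * ρ)⌉₊ := Nat.ceil_pos.2 (by positivity)
    omega
  · have hceil : 1 < ⌈(κ + 1) / (κ * ρ)⌉₊ := by
      rw [Nat.lt_ceil, Nat.cast_one, one_lt_div hκρ_pos]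
      linarith
    omega

lemma le_two_pow_numLevels_succ_sub_one (hκ : 0 < κ) (hρ : 0 < ρ) :
    κ ≤ 2 ^ (numLevels κ ρ + 1) - 1 := by
  have hκρ : 0 < κ * ρ := by positivity
  set f := ⌊Real.logb 2 (κ * ρ)⌋₊ with hf
  set q := ⌈(κ + 1) / (κ * ρ)⌉₊ with hq
  have hq_pos : 0 < q := Nat.ceil_pos.2 (by positivity)
  have hκρ_le : κ * ρ ≤ 2 ^ (f + 1) := by
    have hlog : Real.logb 2 (κ * ρ) < f + 1 := Nat.lt_floor_add_one _
    rw [Real.logb_lt_iff_lt_rpow one_lt_two hκρ] at hlog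
    exact_mod_cast hlog.le
  have hq_le : (q : ℝ) ≤ 2 ^ (q - 1) := by
    have : q - 1 < 2 ^ (q - 1) := Nat.lt_two_pow_self
    exact_mod_cast (by omega : q ≤ 2 ^ (q - 1))
  have hκ_succ : κ + 1 ≤ 2 ^ (numLevels κ ρ + 1) := by
    calc κ + 1 ≤ q * (κ * ρ) := (div_le_iff₀ hκρ).1 (Nat.le_ceil _)
      _ ≤ 2 ^ (q - 1) * 2 ^ (f + 1) := by gcongr
      _ = 2 ^ (numLevels κ ρ + 1) := by
          rw [← pow_add, numLevels, ← hf, ← hq]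
          congr 1
          omega
  linarith

lemma numLevels_le (hρ : 0 < ρ) (hκρ : 1 ≤ κ * ρ) :
    (numLevels κ ρ : ℝ) ≤ Real.logb 2 (κ * ρ) + 1 / ρ + 2 := by
  have hκ : 0 < κ := pos_of_mul_pos_left (zero_lt_one.trans_le hκρ) hρ.le
  have hfloor : (⌊Real.logb 2 (κ * ρ)⌋₊ : ℝ) ≤ Real.logb 2 (κ * ρ) :=
    Nat.floor_le (Real.logb_nonneg one_lt_two hκρ)
  have hceil : (⌈(κ + 1) / (κ * ρ)⌉₊ : ℝ) < (κ + 1) / (κ * ρ) + 1 :=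
    Nat.ceil_lt_add_one (by positivity)
  have hsplit : (κ + 1) / (κ * ρ) = 1 / ρ + 1 / (κ * ρ) := by field_simp
  have hinv : 1 / (κ * ρ) ≤ 1 := div_le_one_of_le₀ hκρ (by positivity)
  have hsub : (numLevels κ ρ : ℝ) ≤ ⌊Real.logb 2 (κ * ρ)⌋₊ + ⌈(κ + 1) / (κ * ρ)⌉₊ := by
    exact_mod_cast Nat.sub_le _ 1
  linarith

lemma two_pow_mul_div_le_hopBase (ha : 1 ≤ a) (hb : 1 ≤ b) (hρ : 0 < ρ) (hκρ : 1 ≤ κ * ρ)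
    (hε : 0 < ε) : 2 ^ 20 * (Real.logb 2 (κ * ρ) + 1 / ρ) / ε ≤ hopBase a b κ ρ ε := by
  have hlog : 0 ≤ Real.logb 2 (κ * ρ) := Real.logb_nonneg one_lt_two hκρ
  rw [hopBase, mul_assoc (2 ^ 20) a b]
  gcongr
  exact le_mul_of_one_le_right (by positivity) (one_le_mul_of_one_le_of_one_le ha hb)

lemma one_le_logb_add_one_div (hκ : 1 ≤ κ) (hρ : 0 < ρ) (hκρ : 1 ≤ κ * ρ) :
    1 ≤ Real.logb 2 (κ * ρ) + 1 / ρ := by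
  have hlog : Real.log (κ * ρ) ≤ Real.logb 2 (κ * ρ) :=
    le_div_self (Real.log_nonneg hκρ) (Real.log_pos one_lt_two)
      (Real.log_two_lt_d9.le.trans (by norm_num))
  have hlog_ge : 1 - (κ * ρ)⁻¹ ≤ Real.log (κ * ρ) :=
    Real.one_sub_inv_le_log_of_pos (zero_lt_one.trans_le hκρ)
  have hinv : (κ * ρ)⁻¹ ≤ 1 / ρ := by
    rw [one_div]
    exact inv_anti₀ hρ (le_mul_of_one_le_left hρ.le hκ)
  linarith

lemma two_pow_le_hopBase (ha : 1 ≤ a) (hb : 1 ≤ b) (hκ : 1 ≤ κ) (hρ : 0 < ρ)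
    (hκρ : 1 ≤ κ * ρ) (hε : 0 < ε) (hε₁ : ε ≤ 1) : 2 ^ 20 ≤ hopBase a b κ ρ ε := by
  refine le_trans ?_ (two_pow_mul_div_le_hopBase ha hb hρ hκρ hε)
  rw [le_div_iff₀ hε]
  linarith [one_le_logb_add_one_div hκ hρ hκρ]

lemma mul_numLevels_div_le_hopBase (ha : 1 ≤ a) (hb : 1 ≤ b) (hκ : 1 ≤ κ) (hρ : 0 < ρ)
    (hκρ : 1 ≤ κ * ρ) (hε : 0 < ε) : 64 * numLevels κ ρ / ε ≤ hopBase a b κ ρ ε := by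
  refine le_trans ?_ (two_pow_mul_div_le_hopBase ha hb hρ hκρ hε)
  refine div_le_div_of_nonneg_right ?_ hε.le
  linarith [numLevels_le hρ hκρ, one_le_logb_add_one_div hκ hρ hκρ]

lemma ten_mul_succ_le_logb {ℓ : ℕ} (hℓ : 0 < ℓ) {Λ : ℝ} (hΛ : (2 ^ 20) ^ ℓ ≤ Λ) :
    10 * ((ℓ : ℝ) + 1) ≤ Real.logb 2 Λ := by
  have hℓ' : (1 : ℝ) ≤ ℓ := Nat.one_le_cast.2 hℓ
  have hlog : ((20 * ℓ : ℕ) : ℝ) ≤ Real.logb 2 Λ := by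
    rw [Real.le_logb_iff_rpow_le one_lt_two (lt_of_lt_of_le (by positivity) hΛ),
      Real.rpow_natCast, pow_mul]
    exact hΛ
  push_cast at hlog
  linarith

lemma ten_mul_succ_mul_rpow_le (hκ : 1 ≤ κ) (hρ : 0 < ρ) (hκρ : 1 ≤ κ * ρ) {n Λ : ℝ}
    (hn : 1 ≤ n) (hΛ : (2 ^ 20) ^ numLevels κ ρ ≤ Λ) :
    10 * ((numLevels κ ρ : ℝ) + 1) * n ^ (1 + 1 / ((2 : ℝ) ^ (numLevels κ ρ + 1) - 1)) ≤
      ⌈Real.logb 2 Λ⌉₊ * n ^ (1 + 1 / κ) := by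
  have hfactor : 10 * ((numLevels κ ρ : ℝ) + 1) ≤ ⌈Real.logb 2 Λ⌉₊ :=
    (ten_mul_succ_le_logb (numLevels_pos hκ hκρ) hΛ).trans (Nat.le_ceil _)
  have hκ_pos : 0 < κ := zero_lt_one.trans_le hκ
  gcongr
  exact le_two_pow_numLevels_succ_sub_one hκ_pos hρ

theorem exists_isHopset_of_pow_hopBase_le {V : Type*} [Fintype V] [Nontrivial V]
    {w : V → V → ℝ≥0∞} (hw : IsConnectedWeight w) (hε : 0 < ε) (hε₁ : ε ≤ 1) (hκ : 1 ≤ κ)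
    (hρ : 0 < ρ) (hκρ : 1 ≤ κ * ρ) {Λ : ℝ} (hΛ : 2 ≤ Λ) {β : ℕ} (hβΛ : β ≤ Λ)
    (hβ : hopBase (Real.logb 2 Λ) (Real.logb 2 (Fintype.card V)) κ ρ ε ^ numLevels κ ρ ≤ β) :
    ∃ wH : V → V → ℝ≥0∞,
      ({p : V × V | wH p.1 p.2 ≠ ⊤}.ncard : ℝ) ≤
        ⌈Real.logb 2 Λ⌉₊ * (Fintype.card V : ℝ) ^ (1 + 1 / κ) ∧
      IsHopset w wH ε β := by
  have hcard : (2 : ℝ) ≤ Fintype.card V := by exact_mod_cast Fintype.one_lt_card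
  have hlogΛ : 1 ≤ Real.logb 2 Λ := one_le_logb_two hΛ
  have hlogn : 1 ≤ Real.logb 2 (Fintype.card V) := one_le_logb_two hcard
  have hpow : (2 ^ 20) ^ numLevels κ ρ ≤ Λ :=
    (pow_le_pow_left₀ (by norm_num)
      (two_pow_le_hopBase hlogΛ hlogn hκ hρ hκρ hε hε₁) _).trans (hβ.trans hβΛ)
  obtain ⟨wH, hsize, hhop⟩ := exists_isHopset hw hε hε₁ (numLevels κ ρ)
  refine ⟨wH, hsize.trans (ten_mul_succ_mul_rpow_le hκ hρ hκρ (by linarith) hpow),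
    hhop β (le_trans ?_ hβ)⟩
  gcongr
  exact mul_numLevels_div_le_hopBase hlogΛ hlogn hκ hρ hκρ hε

end Parameters

theorem main_hopset_existence_general {V : Type*} [Fintype V] {w : V → V → ℝ≥0∞}
    (hsymm : ∀ a b, w a b = w b a) (hone : ∀ a b, a ≠ b → w a b ≠ ⊤ → 1 ≤ w a b)
    (hfin : ∀ a b, graphDist w a b < ⊤) {Λ : ℝ≥0∞} (hΛ : Λ = ⨆ u, ⨆ v, graphDist w u v)
    (hΛ₂ : 2 ≤ Λ) {ε κ ρ : ℝ} (hε : 0 < ε) (hε₁ : ε ≤ 1) (hκ : 1 ≤ κ) (hρ : 0 < ρ)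
    (hκρ : 1 ≤ κ * ρ) {β : ℕ}
    (hβ : hopBase (Real.logb 2 Λ.toReal) (Real.logb 2 (Fintype.card V)) κ ρ ε ^ numLevels κ ρ ≤ β) :
    ∃ wH : V → V → ℝ≥0∞,
      ({p : V × V | wH p.1 p.2 ≠ ⊤}.ncard : ℝ) ≤
        ⌈Real.logb 2 Λ.toReal⌉₊ * (Fintype.card V : ℝ) ^ (1 + 1 / κ) ∧
      IsHopset w wH ε β := by
  have hw (a b : V) (hab : a ≠ b) : 1 ≤ w a b := by
    rcases eq_or_ne (w a b) ⊤ with htop | htop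
    · exact htop ▸ le_top
    · exact hone a b hab htop
  have hdist (u v : V) : graphDist w u v ≤ Λ := hΛ ▸ le_iSup₂ (f := graphDist w) u v
  by_cases hΛβ : Λ ≤ β
  · have hsize : ({_p : V × V | (⊤ : ℝ≥0∞) ≠ ⊤}.ncard : ℝ) = 0 := by simp
    exact ⟨fun _ _ ↦ ⊤, hsize.trans_le (by positivity),
      isHopset_top_of_graphDist_le hw hε.le fun u v ↦ (hdist u v).trans hΛβ⟩
  have hΛtop : Λ ≠ ⊤ := hΛ ▸ iSup_ne_top fun u ↦ iSup_ne_top fun v ↦ (hfin u v).ne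
  have hΛ₂' : 2 ≤ Λ.toReal := by simpa using ENNReal.toReal_mono hΛtop hΛ₂
  have hβΛ : β ≤ Λ.toReal := by simpa using ENNReal.toReal_mono hΛtop (not_le.1 hΛβ).le
  have : Nontrivial V := by
    by_contra htriv
    have := not_nontrivial_iff_subsingleton.1 htriv
    have hzero (u v : V) : graphDist w u v = 0 := Subsingleton.elim u v ▸ graphDist_self w u
    simp [hΛ, hzero] at hΛ₂
  have hconn : IsConnectedWeight w :=
    ⟨hsymm, fun a b hab ↦ zero_lt_one.trans_le (hw a b hab), fun a b ↦ (hfin a b).ne⟩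
  exact exists_isHopset_of_pow_hopBase_le hconn hε hε₁ hκ hρ hκρ hΛ₂' hβΛ hβ

/-- existence form of the main hopset theorem (Theorem 3.5,
without the computational complexity claims). -/
theorem main_hopset_existence :
    ∃ c : ℝ, 0 < c ∧
      ∀ (V : Type) (_ : Fintype V) (w : V → V → ℝ≥0∞),
        (∀ a b, w a b = w b a) →
        (∀ a b, a ≠ b → w a b ≠ ⊤ → 1 ≤ w a b) →
        (∀ a b, graphDist w a b < ⊤) →
        2 ≤ Fintype.card V →
        ∀ Λ : ℝ≥0∞, Λ = (⨆ u, ⨆ v, graphDist w u v) → 2 ≤ Λ →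
        ∀ ε : ℝ, 0 < ε → ε < 1 →
        ∀ κ : ℕ, 2 ≤ κ →
        ∀ ρ : ℝ, 0 < ρ → ρ < 1 / 2 → 1 ≤ (κ : ℝ) * ρ →
        ∀ ℓ : ℕ,
          ℓ = ⌊Real.logb 2 ((κ : ℝ) * ρ)⌋₊ + ⌈((κ : ℝ) + 1) / ((κ : ℝ) * ρ)⌉₊ - 1 →
        ∀ β : ℕ,
          β = ⌈(c * Real.logb 2 Λ.toReal * Real.logb 2 (Fintype.card V) *
                (Real.logb 2 ((κ : ℝ) * ρ) + 1 / ρ) / ε) ^ ℓ⌉₊ →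
        ∃ wH : V → V → ℝ≥0∞,
          (Set.ncard {pr : V × V | wH pr.1 pr.2 ≠ ⊤} : ℝ) ≤
            (⌈Real.logb 2 Λ.toReal⌉₊ : ℝ) *
              (Fintype.card V : ℝ) ^ ((1 : ℝ) + 1 / (κ : ℝ)) ∧
          ∀ u v : V,
            graphDist w u v ≤
                hopDist (fun a b => min (w a b) (wH a b)) β u v ∧
              hopDist (fun a b => min (w a b) (wH a b)) β u v ≤
                ENNReal.ofReal (1 + ε) * graphDist w u v := by
  exact ⟨2 ^ 20, by norm_num,
    fun _ _ _ hsymm hone hfin _ _ hΛ hΛ₂ _ hε hε₁ _ hκ _ hρ _ hκρ _ hℓ _ hβ ↦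
      main_hopset_existence_general hsymm hone hfin hΛ hΛ₂ hε hε₁.le
        (mod_cast one_le_two.trans hκ) hρ hκρ (hβ ▸ hℓ ▸ Nat.le_ceil _)⟩
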